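/- Let m ≥ 2 and let T : ℝ^m → ℝ be of class C². Let ε > 0 and assume that the set T⁻¹([−ε, ε]) is compact and that every critical point p of T with T(p) ∈ [−ε, ε] is nondegenerate. Then ℋ^{m−1}(T⁻¹(t)) is finite for every t ∈ [−ε, ε], and the function φ : [−ε, ε] → ℝ, φ(t) = ℋ^{m−1}(T⁻¹(t)), is continuous on [−ε, ε]. -/

import Mathlib

open MeasureTheory

/-!
Away from the critical points a small displacement `x ↦ x + σ x • V x` along a `C¹` field `V` with
`dT(V) > 0` carries the level `t` into any prescribed nearby level `t'`. The time `σ` has small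
Lipschitz constant, so on a compact set `W` free of critical points
`ℋ^{m-1}(T⁻¹(t) ∩ W) ≤ (1 + δ) ℋ^{m-1}(T⁻¹(t'))` whenever `|t - t'|` is small. This bound is
symmetric in `t` and `t'`, so it gives both halves of continuity once the mass near the critical
points is known to be small uniformly in `t`.

For the latter, let `p` be a nondegenerate critical point with Hessian `A`. Near `p` we have
`dT(x) ≈ A(x - p)` with small relative error, so a punctured neighbourhood of `p` is covered by
finitely many convex cones, on each of which a fixed vector `e` nearly norms `dT`. In such a cone
the projection along `e` is bi-Lipschitz on every level, with a constant independent of the level.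
Hence `ℋ^{m-1}` of a level near `p` is bounded by a multiple of `ℋ^{m-1}` of a small set in the
`(m-1)`-dimensional quotient by the line `ℝ ∙ e`.
-/

open Filter Metric Module Set Submodule
open scoped ENNReal NNReal Topology Uniformity

section HausdorffMeasure

variable {X Y : Type*} [EMetricSpace X] [MeasurableSpace X] [BorelSpace X]
  [EMetricSpace Y] [MeasurableSpace Y] [BorelSpace Y]

lemma hausdorffMeasure_le_of_antilipschitzWith_domRestrict {f : X → Y} {s : Set X} {K : ℝ≥0}
    (hf : AntilipschitzWith K (s.domRestrict f)) {d : ℝ} (hd : 0 ≤ d) :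
    μH[d] s ≤ (K : ℝ≥0∞) ^ d * μH[d] (f '' s) := by
  have hs := (isometry_subtype_coe (s := s)).hausdorffMeasure_image (.inl hd) univ
  rw [image_univ, Subtype.range_coe] at hs
  rw [hs, ← range_domRestrict, ← image_univ]
  exact hf.le_hausdorffMeasure_image hd univ

lemma hausdorffMeasure_le_image_add_of_lipschitzOnWith {E : Type*} [NormedAddCommGroup E]
    [MeasurableSpace E] [BorelSpace E] {g : E → E} {s : Set E} {q : ℝ≥0}
    (hg : LipschitzOnWith q g s) (hq : q < 1) {d : ℝ} (hd : 0 ≤ d) :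
    μH[d] s ≤ ((1 - q)⁻¹ : ℝ≥0) ^ d * μH[d] ((fun x ↦ x + g x) '' s) := by
  have hadd := (isometry_subtype_coe (s := s)).antilipschitz.add_lipschitzWith
    hg.to_restrict (by simpa using hq)
  rw [inv_one] at hadd
  exact hausdorffMeasure_le_of_antilipschitzWith_domRestrict hadd hd

end HausdorffMeasure

/-- The sets `A i` carry arbitrarily little `μ`-measure along the filter `l`, uniformly in `i`:
for each `δ > 0` a single member `U` of `l` satisfies `μ (A i ∩ U) ≤ δ` for all `i`. Here it is
applied to the family of level sets of a function near a point or a finite set. -/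
def UniformlyNullAlong {X ι : Type*} [MeasurableSpace X] (μ : Measure X) (A : ι → Set X)
    (l : Filter X) : Prop :=
  ∀ δ : ℝ≥0∞, 0 < δ → ∃ U ∈ l, ∀ i, μ (A i ∩ U) ≤ δ

namespace UniformlyNullAlong

variable {X ι : Type*} [MeasurableSpace X] {μ : Measure X} {A : ι → Set X} {l l' : Filter X}

lemma mono (h : UniformlyNullAlong μ A l) (hl : l' ≤ l) : UniformlyNullAlong μ A l' :=
  fun δ hδ ↦ (h δ hδ).imp fun _ hU ↦ ⟨hl hU.1, hU.2⟩

lemma sup (h : UniformlyNullAlong μ A l) (h' : UniformlyNullAlong μ A l') :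
    UniformlyNullAlong μ A (l ⊔ l') := by
  intro δ hδ
  obtain ⟨U, hU, hAU⟩ := h (δ / 2) (ENNReal.half_pos hδ.ne')
  obtain ⟨U', hU', hAU'⟩ := h' (δ / 2) (ENNReal.half_pos hδ.ne')
  refine ⟨U ∪ U', union_mem_sup hU hU', fun i ↦ ?_⟩
  calc μ (A i ∩ (U ∪ U')) ≤ μ (A i ∩ U) + μ (A i ∩ U') := by
        rw [inter_union_distrib_left]
        exact measure_union_le _ _
    _ ≤ δ / 2 + δ / 2 := add_le_add (hAU i) (hAU' i)
    _ = δ := ENNReal.add_halves δ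

lemma biSup {κ : Type*} {s : Set κ} (hs : s.Finite) {l : κ → Filter X}
    (h : ∀ k ∈ s, UniformlyNullAlong μ A (l k)) : UniformlyNullAlong μ A (⨆ k ∈ s, l k) := by
  induction s, hs using Set.Finite.induction_on with
  | empty => exact fun δ _ ↦ ⟨∅, by simp, by simp⟩
  | insert _ _ ih =>
    rw [iSup_insert]
    exact (h _ (mem_insert ..)).sup (ih fun k hk ↦ h k (mem_insert_of_mem _ hk))

lemma nhdsSet [TopologicalSpace X] {Z : Set X} (hZ : Z.Finite)
    (h : ∀ p ∈ Z, UniformlyNullAlong μ A (𝓝 p)) : UniformlyNullAlong μ A (𝓝ˢ Z) := by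
  rw [_root_.nhdsSet, sSup_image]
  exact biSup hZ h

lemma of_measure_singleton_eq_zero {p : X} (hp : μ {p} = 0) : UniformlyNullAlong μ A (pure p) :=
  fun δ _ ↦ ⟨{p}, by simp, fun i ↦ (measure_mono inter_subset_right).trans (by simp [hp])⟩

lemma measure_ne_top_of_isCompact [TopologicalSpace X] {i : ι} (hA : IsCompact (A i))
    (h : ∀ p ∈ A i, UniformlyNullAlong μ A (𝓝 p)) : μ (A i) ≠ ⊤ := by
  refine (hA.measure_lt_top_of_nhdsWithin fun p hp ↦ ?_).ne
  obtain ⟨U, hU, hAU⟩ := h p hp 1 one_pos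
  exact ⟨A i ∩ U, inter_mem_nhdsWithin _ hU, (hAU i).trans_lt ENNReal.one_lt_top⟩

end UniformlyNullAlong

lemma uniformlyNullAlong_nhdsWithin_of_antilipschitzWith {X Y ι : Type*} [EMetricSpace X]
    [MeasurableSpace X] [BorelSpace X] [EMetricSpace Y] [MeasurableSpace Y] [BorelSpace Y]
    {d : ℝ} (hd : 0 < d) [(μH[d] : Measure Y).OuterRegular] {A : ι → Set X} {C : Set X} {p : X}
    {f : X → Y} (hf : ContinuousAt f p) {K : ℝ≥0}
    (hK : ∀ i, AntilipschitzWith K ((A i ∩ C).domRestrict f)) :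
    UniformlyNullAlong μH[d] A (𝓝[C] p) := by
  intro δ hδ
  have hKd : (K : ℝ≥0∞) ^ d ≠ ⊤ := ENNReal.rpow_ne_top_of_nonneg hd.le ENNReal.coe_ne_top
  have : NullSingletonClass (μH[d] : Measure Y) := Measure.nullSingletonClass_hausdorff Y hd
  obtain ⟨V, hpV, hVo, hV⟩ := Set.exists_isOpen_lt_of_lt {f p} (δ / (K : ℝ≥0∞) ^ d)
    (μ := (μH[d] : Measure Y)) (by
      rw [measure_singleton]
      exact ENNReal.div_pos hδ.ne' hKd)
  refine ⟨f ⁻¹' V ∩ C, inter_mem (mem_nhdsWithin_of_mem_nhds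
    (hf.preimage_mem_nhds (hVo.mem_nhds (hpV rfl)))) self_mem_nhdsWithin, fun i ↦ ?_⟩
  have hsub : A i ∩ (f ⁻¹' V ∩ C) ⊆ A i ∩ C := fun x hx ↦ ⟨hx.1, hx.2.2⟩
  have himage : f '' (A i ∩ (f ⁻¹' V ∩ C)) ⊆ V := by
    rintro _ ⟨x, hx, rfl⟩
    exact hx.2.1
  calc μH[d] (A i ∩ (f ⁻¹' V ∩ C))
      ≤ (K : ℝ≥0∞) ^ d * μH[d] (f '' (A i ∩ (f ⁻¹' V ∩ C))) :=
        hausdorffMeasure_le_of_antilipschitzWith_domRestrict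
          (fun x y ↦ hK i ⟨x, hsub x.2⟩ ⟨y, hsub y.2⟩) hd.le
    _ ≤ (K : ℝ≥0∞) ^ d * (δ / (K : ℝ≥0∞) ^ d) := by
        gcongr
        exact (measure_mono himage).trans hV.le
    _ ≤ δ := ENNReal.mul_div_le

lemma continuousOn_toReal_of_forall_eventually_le {X : Type*} [UniformSpace X] {f : X → ℝ≥0∞}
    {I : Set X} (hfin : ∀ t ∈ I, f t ≠ ⊤)
    (h : ∀ δ : ℝ≥0, 0 < δ → ∀ᶠ z : X × X in 𝓤 X, z.1 ∈ I → f z.1 ≤ (1 + δ) * f z.2 + δ) :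
    ContinuousOn (fun t ↦ (f t).toReal) I := by
  have hlim (a : ℝ≥0∞) (ha : a ≠ ⊤) :
      Tendsto (fun δ : ℝ≥0 ↦ (1 + δ) * a + δ) (𝓝[>] 0) (𝓝 a) := by
    have hδ : Tendsto (fun δ : ℝ≥0 ↦ (δ : ℝ≥0∞)) (𝓝[>] 0) (𝓝 0) :=
      (ENNReal.continuous_coe.tendsto 0).mono_left nhdsWithin_le_nhds
    simpa using (ENNReal.Tendsto.mul_const (hδ.const_add 1) (.inr ha)).add hδ
  suffices ContinuousOn f I from ENNReal.continuousOn_toReal.comp this hfin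
  intro t ht
  refine tendsto_order.2 ⟨fun a ha ↦ ?_, fun a ha ↦ ?_⟩
  · obtain ⟨δ, hδa, hδ⟩ := (((hlim a ha.ne_top).eventually_lt_const ha).and
      self_mem_nhdsWithin).exists
    filter_upwards [mem_nhdsWithin_of_mem_nhds (mem_nhds_left t (h δ hδ))] with u hu
    by_contra! hua
    exact ((hu ht).trans (by gcongr)).not_gt hδa
  · obtain ⟨δ, hδa, hδ⟩ := (((hlim (f t) (hfin t ht)).eventually_lt_const ha).and
      self_mem_nhdsWithin).exists
    filter_upwards [mem_nhdsWithin_of_mem_nhds (mem_nhds_right t (h δ hδ)),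
      self_mem_nhdsWithin] with u hu hI
    exact (hu hI).trans_lt hδa

section SteepCone

variable {E : Type*} [NormedAddCommGroup E] [NormedSpace ℝ E] {e : E} {k : ℝ}

/-- The functionals `φ` that the direction `e` norms up to the factor `k`. If the derivative of `T`
stays in such a cone on a convex set, then the level sets of `T` in that set are Lipschitz graphs
over `E ⧸ ℝ ∙ e`. -/
def steepCone (e : E) (k : ℝ) : Set (E →L[ℝ] ℝ) :=
  {φ | ‖φ‖ < k * φ e}

lemma ne_zero_of_mem_steepCone {φ : E →L[ℝ] ℝ} (hφ : φ ∈ steepCone e k) : φ ≠ 0 := by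
  rintro rfl
  simp [steepCone] at hφ

lemma isOpen_steepCone : IsOpen (steepCone e k) :=
  isOpen_lt continuous_norm (by fun_prop)

lemma convex_steepCone : Convex ℝ (steepCone e k) := by
  have hconv : ConvexOn ℝ univ fun φ : E →L[ℝ] ℝ ↦ ‖φ‖ - k * φ e :=
    convexOn_univ_norm.sub
      ((k • ContinuousLinearMap.apply ℝ ℝ e).toLinearMap.concaveOn convex_univ)
  simpa [steepCone, sub_neg] using hconv.convex_lt 0

lemma mem_steepCone_three_of_norm_sub_le {φ ψ : E →L[ℝ] ℝ} (he : ‖e‖ ≤ 1)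
    (hφ : φ ∈ steepCone e 2) (hψ : ‖ψ - φ‖ ≤ ‖φ‖ / 8) : ψ ∈ steepCone e 3 := by
  have hnorm : ‖ψ‖ ≤ ‖ψ - φ‖ + ‖φ‖ := by simpa using norm_add_le (ψ - φ) φ
  have happly : |ψ e - φ e| ≤ ‖ψ - φ‖ := by
    simpa using (ψ - φ).le_of_opNorm_le_of_le le_rfl he
  have := (abs_le.1 happly).1
  -- The constants fit because `3 * (1 / 2 - 1 / 8) = 1 + 1 / 8`.
  simp only [steepCone, mem_ofPred_eq] at hφ ⊢
  linarith

lemma exists_finite_forall_mem_steepCone_two (E : Type*) [NormedAddCommGroup E] [NormedSpace ℝ E]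
    [FiniteDimensional ℝ E] :
    ∃ s ⊆ closedBall (0 : E) 1, s.Finite ∧ ∀ φ : E →L[ℝ] ℝ, φ ≠ 0 → ∃ e ∈ s, φ ∈ steepCone e 2 := by
  obtain ⟨s, hs, hfin, hcover⟩ :=
    (isCompact_closedBall (0 : E) 1).finite_cover_balls (e := 1 / 4) (by norm_num)
  refine ⟨s, hs, hfin, fun φ hφ ↦ ?_⟩
  have hφpos : 0 < ‖φ‖ := norm_pos_iff.2 hφ
  obtain ⟨u, hu, hφu⟩ : ∃ u : E, ‖u‖ ≤ 1 ∧ 3 / 4 * ‖φ‖ < φ u := by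
    obtain ⟨v, hv, hφv⟩ := φ.exists_lt_apply_of_lt_opNorm (r := 3 / 4 * ‖φ‖) (by linarith)
    rcases lt_abs.1 hφv with h | h
    · exact ⟨v, hv.le, h⟩
    · exact ⟨-v, by simpa using hv.le, by simpa using h⟩
  obtain ⟨e, hes, hue⟩ := mem_iUnion₂.1 (hcover (mem_closedBall_zero_iff.2 hu))
  have hclose : |φ u - φ e| ≤ ‖φ‖ * (1 / 4) := by
    rw [← map_sub]
    exact φ.le_of_opNorm_le_of_le le_rfl (mem_ball_iff_norm.1 hue).le
  refine ⟨e, hes, ?_⟩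
  have := (abs_le.1 hclose).2
  simp only [steepCone, mem_ofPred_eq]
  linarith

lemma norm_le_mul_norm_mkQ_of_mem_steepCone (he : ‖e‖ ≤ 1) (hk : 0 ≤ k) {φ : E →L[ℝ] ℝ}
    (hφ : φ ∈ steepCone e k) {v : E} (hv : φ v = 0) : ‖v‖ ≤ (1 + k) * ‖(ℝ ∙ e).mkQ v‖ := by
  refine le_of_forall_pos_le_add fun ε hε ↦ ?_
  obtain ⟨w, hw, hwnorm⟩ := Submodule.Quotient.norm_mk_lt ((ℝ ∙ e).mkQ v)
    (show 0 < ε / (1 + k) by positivity)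
  obtain ⟨a, ha⟩ : ∃ a : ℝ, a • e = v - w := mem_span_singleton.1 <|
    (Submodule.Quotient.eq (ℝ ∙ e)).1 hw.symm
  have hφe : 0 < φ e := pos_of_mul_pos_right ((norm_nonneg φ).trans_lt hφ) hk
  have haw : a * φ e = -φ w := by
    rw [← smul_eq_mul, ← map_smul, ha, map_sub, hv, zero_sub]
  have ha_le : |a| ≤ k * ‖w‖ := by
    refine le_of_mul_le_mul_right ?_ hφe
    calc |a| * φ e = |a * φ e| := by rw [abs_mul, abs_of_pos hφe]
      _ = ‖φ w‖ := by rw [haw, abs_neg, Real.norm_eq_abs]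
      _ ≤ ‖φ‖ * ‖w‖ := φ.le_opNorm w
      _ ≤ (k * φ e) * ‖w‖ := by gcongr; exact hφ.le
      _ = k * ‖w‖ * φ e := by ring
  calc ‖v‖ = ‖w + a • e‖ := by rw [ha, add_sub_cancel]
    _ ≤ ‖w‖ + |a| * ‖e‖ := by simpa [norm_smul] using norm_add_le w (a • e)
    _ ≤ ‖w‖ + k * ‖w‖ * 1 := by gcongr
    _ = (1 + k) * ‖w‖ := by ring
    _ ≤ (1 + k) * (‖(ℝ ∙ e).mkQ v‖ + ε / (1 + k)) := by gcongr
    _ = (1 + k) * ‖(ℝ ∙ e).mkQ v‖ + ε := by field_simp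

lemma antilipschitzWith_mkQ_level_inter {T : E → ℝ} {C : Set E} (hC : Convex ℝ C)
    (he : ‖e‖ ≤ 1) {k : ℝ≥0} (hTC : ∀ x ∈ C, fderiv ℝ T x ∈ steepCone e k) (t : ℝ) :
    AntilipschitzWith (1 + k) ((T ⁻¹' {t} ∩ C).domRestrict (ℝ ∙ e).mkQ) := by
  have hdiff (x : E) (hx : x ∈ C) : HasFDerivWithinAt T (fderiv ℝ T x) C x := by
    by_contra h
    exact ne_zero_of_mem_steepCone (hTC x hx)
      (fderiv_zero_of_not_differentiableAt fun hd ↦ h hd.hasFDerivAt.hasFDerivWithinAt)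
  refine AntilipschitzWith.of_le_mul_dist fun ⟨x, hxt, hx⟩ ⟨y, hyt, hy⟩ ↦ ?_
  obtain ⟨z, hz, hxy⟩ := domain_mvt hdiff hC hy hx
  rw [hxt, hyt, sub_self] at hxy
  simpa [Subtype.dist_eq, dist_eq_norm] using norm_le_mul_norm_mkQ_of_mem_steepCone he k.2
    (hTC z (hC.segment_subset hy hx hz)) hxy.symm

lemma eventually_norm_sub_apply_le_of_antilipschitzWith {F : Type*}
    [NormedAddCommGroup F] [NormedSpace ℝ F] {D : E → F} {A : E →L[ℝ] F} {p : E}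
    (hA : HasFDerivAt D A p) (hp : D p = 0) {K : ℝ≥0} (hK0 : 0 < K)
    (hK : AntilipschitzWith K A) :
    ∀ᶠ x in 𝓝 p, ‖D x - A (x - p)‖ ≤ ‖A (x - p)‖ / 8 := by
  filter_upwards [hA.isLittleO.bound (c := 1 / (8 * K)) (by positivity)] with x hx
  have hAx : ‖x - p‖ ≤ K * ‖A (x - p)‖ := by simpa using hK.le_mul_dist (x - p) 0
  calc ‖D x - A (x - p)‖ ≤ 1 / (8 * K) * ‖x - p‖ := by simpa [hp] using hx
    _ ≤ 1 / (8 * K) * (K * ‖A (x - p)‖) := by gcongr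
    _ = ‖A (x - p)‖ / 8 := by field_simp

end SteepCone

section LocalMeasure

variable {E : Type*} [NormedAddCommGroup E] [NormedSpace ℝ E] [FiniteDimensional ℝ E]
  [MeasurableSpace E] [BorelSpace E] {T : E → ℝ} {p : E}

lemma uniformlyNullAlong_level_of_mem_steepCone (hE : 2 ≤ finrank ℝ E) {C : Set E}
    (hC : Convex ℝ C) {e : E} (he : ‖e‖ ≤ 1) {k : ℝ≥0}
    (hTC : ∀ x ∈ C, fderiv ℝ T x ∈ steepCone e k) (p : E) :
    UniformlyNullAlong μH[(finrank ℝ E : ℝ) - 1] (fun t ↦ T ⁻¹' {t}) (𝓝[C] p) := by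
  rcases C.eq_empty_or_nonempty with rfl | ⟨x, hx⟩
  · exact fun δ _ ↦ ⟨∅, by simp, by simp⟩
  have he0 : e ≠ 0 := by
    rintro rfl
    exact (norm_nonneg _).not_gt (by simpa [steepCone] using hTC x hx)
  have : IsClosed ((ℝ ∙ e : Submodule ℝ E) : Set E) := (ℝ ∙ e).closed_of_finiteDimensional
  borelize (E ⧸ ℝ ∙ e)
  have hfinrank : (finrank ℝ E : ℝ) - 1 = finrank ℝ (E ⧸ ℝ ∙ e) := by
    have := (ℝ ∙ e).finrank_quotient_add_finrank
    rw [finrank_span_singleton he0] at this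
    rw [← this]
    push_cast
    ring
  have hpos : 0 < (finrank ℝ E : ℝ) - 1 := by
    rw [sub_pos]
    exact_mod_cast hE
  rw [hfinrank] at hpos ⊢
  exact uniformlyNullAlong_nhdsWithin_of_antilipschitzWith (f := (ℝ ∙ e).mkQ) hpos
    (ℝ ∙ e).mkQL.continuous.continuousAt (antilipschitzWith_mkQ_level_inter hC he hTC)

lemma uniformlyNullAlong_level_of_fderiv_ne_zero (hE : 2 ≤ finrank ℝ E)
    (hT : ContinuousAt (fderiv ℝ T) p) (hp : fderiv ℝ T p ≠ 0) :
    UniformlyNullAlong μH[(finrank ℝ E : ℝ) - 1] (fun t ↦ T ⁻¹' {t}) (𝓝 p) := by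
  obtain ⟨s, hs, -, hcover⟩ := exists_finite_forall_mem_steepCone_two E
  obtain ⟨e, hes, hpe⟩ := hcover _ hp
  obtain ⟨r, hr, hball⟩ := Metric.mem_nhds_iff.1
    (hT.preimage_mem_nhds (isOpen_steepCone.mem_nhds hpe))
  have := uniformlyNullAlong_level_of_mem_steepCone hE (convex_ball p r)
    (mem_closedBall_zero_iff.1 (hs hes)) (k := 2) hball p
  rwa [isOpen_ball.nhdsWithin_eq (mem_ball_self hr)] at this

lemma uniformlyNullAlong_level_of_fderiv_eq_zero (hE : 2 ≤ finrank ℝ E)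
    {A : E →L[ℝ] E →L[ℝ] ℝ} (hA : HasFDerivAt (fderiv ℝ T) A p) (hp : fderiv ℝ T p = 0)
    {K : ℝ≥0} (hK0 : 0 < K) (hK : AntilipschitzWith K A) :
    UniformlyNullAlong μH[(finrank ℝ E : ℝ) - 1] (fun t ↦ T ⁻¹' {t}) (𝓝 p) := by
  obtain ⟨s, hs, hfin, hcover⟩ := exists_finite_forall_mem_steepCone_two E
  obtain ⟨r, hr, hball⟩ := Metric.mem_nhds_iff.1
    (eventually_norm_sub_apply_le_of_antilipschitzWith hA hp hK0 hK)
  let C (e : E) : Set E := (fun x ↦ A (x - p)) ⁻¹' steepCone e 2 ∩ ball p r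
  have hC (e : E) : Convex ℝ (C e) := by
    simp only [C, sub_eq_add_neg]
    exact ((convex_steepCone.linear_preimage A.toLinearMap).translate_preimage_left (-p)).inter
      (convex_ball p r)
  have hcone (e : E) (he : e ∈ s) :
      UniformlyNullAlong μH[(finrank ℝ E : ℝ) - 1] (fun t ↦ T ⁻¹' {t}) (𝓝[C e] p) :=
    have he1 : ‖e‖ ≤ 1 := mem_closedBall_zero_iff.1 (hs he)
    uniformlyNullAlong_level_of_mem_steepCone hE (hC e) he1 (k := 3)
      (fun x hx ↦ mem_steepCone_three_of_norm_sub_le he1 hx.1 (hball hx.2)) p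
  have hunion : ⋃ e ∈ s, C e ∈ 𝓝[≠] p := by
    filter_upwards [self_mem_nhdsWithin, mem_nhdsWithin_of_mem_nhds (ball_mem_nhds p hr)]
      with x hxp hxr
    have hAx : A (x - p) ≠ 0 := by
      rw [← map_zero A]
      exact hK.injective.ne (sub_ne_zero.2 hxp)
    obtain ⟨e, he, hxe⟩ := hcover _ hAx
    exact mem_iUnion₂.2 ⟨e, he, hxe, hxr⟩
  have : NullSingletonClass (μH[(finrank ℝ E : ℝ) - 1] : Measure E) :=
    Measure.nullSingletonClass_hausdorff E (by rw [sub_pos]; exact_mod_cast hE)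
  rw [← nhdsNE_sup_pure]
  refine .sup (.mono (.biSup hfin hcone) ?_) (.of_measure_singleton_eq_zero (measure_singleton p))
  rw [← nhdsWithin_biUnion hfin]
  exact nhdsWithin_le_of_mem hunion

end LocalMeasure

section Displacement

lemma exists_clm_forall_apply_pos (E : Type*) [NormedAddCommGroup E] [NormedSpace ℝ E]
    [FiniteDimensional ℝ E] :
    ∃ R : (E →L[ℝ] ℝ) →L[ℝ] E, ∀ φ : E →L[ℝ] ℝ, φ ≠ 0 → 0 < φ (R φ) := by
  -- `R φ` is the gradient of `φ` for the inner product in which `b` is orthonormal.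
  let b := finBasis ℝ E
  refine ⟨∑ i, (ContinuousLinearMap.apply ℝ ℝ (b i)).smulRight (b i), fun φ hφ ↦ ?_⟩
  obtain ⟨i, hi⟩ : ∃ i, φ (b i) ≠ 0 := by
    by_contra! h
    exact hφ (ContinuousLinearMap.coe_injective (b.ext h))
  simp only [sum_apply, ContinuousLinearMap.smulRight_apply,
    ContinuousLinearMap.apply_apply, map_sum, map_smul, smul_eq_mul]
  exact Finset.sum_pos' (fun j _ ↦ mul_self_nonneg _) ⟨i, Finset.mem_univ i, mul_self_pos.2 hi⟩

lemma exists_mem_Icc_eq_of_le_deriv {f : ℝ → ℝ} {c S t : ℝ} (hf : Differentiable ℝ f) (hS : 0 ≤ S)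
    (hc : ∀ τ ∈ Icc (-S) S, c ≤ deriv f τ) (ht : |t - f 0| ≤ c * S) :
    ∃ τ ∈ Icc (-S) S, f τ = t := by
  have hgrowth := (convex_Icc (-S) S).mul_sub_le_image_sub_of_le_deriv hf.continuous.continuousOn
    hf.differentiableOn fun τ hτ ↦ hc τ (interior_subset hτ)
  have h0 : (0 : ℝ) ∈ Icc (-S) S := ⟨by linarith, hS⟩
  have hleft := hgrowth (-S) (left_mem_Icc.2 (by linarith)) 0 h0 h0.1
  have hright := hgrowth 0 h0 S (right_mem_Icc.2 (by linarith)) hS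
  rw [abs_le] at ht
  exact intermediate_value_Icc (by linarith) hf.continuous.continuousOn
    ⟨by linarith, by linarith⟩

lemma mul_abs_sub_le_abs_image_sub_of_le_deriv {f : ℝ → ℝ} {c : ℝ} {s : Set ℝ} (hs : Convex ℝ s)
    (hf : Differentiable ℝ f) (hc : ∀ τ ∈ s, c ≤ deriv f τ) {a b : ℝ} (ha : a ∈ s) (hb : b ∈ s) :
    c * |a - b| ≤ |f a - f b| := by
  have hgrowth := hs.mul_sub_le_image_sub_of_le_deriv hf.continuous.continuousOn
    hf.differentiableOn fun τ hτ ↦ hc τ (interior_subset hτ)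
  rcases le_total a b with hab | hab
  · rw [abs_sub_comm a, abs_sub_comm (f a), abs_of_nonneg (sub_nonneg.2 hab)]
    exact (hgrowth a ha b hb hab).trans (le_abs_self _)
  · rw [abs_of_nonneg (sub_nonneg.2 hab)]
    exact (hgrowth b hb a ha hab).trans (le_abs_self _)

lemma exists_lipschitzOnWith_hittingTime {X : Type*} [PseudoMetricSpace X] {F : X → ℝ → ℝ}
    {s : Set X} {S c D : ℝ≥0} {t t' : ℝ} (hF : ∀ x, Differentiable ℝ (F x)) (hc0 : 0 < c)
    (hc : ∀ x ∈ s, ∀ τ ∈ Icc (-S : ℝ) S, c ≤ deriv (F x) τ)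
    (hD : ∀ x ∈ s, ∀ y ∈ s, ∀ τ ∈ Icc (-S : ℝ) S,
      |deriv (F x) τ - deriv (F y) τ| ≤ D * dist x y)
    (ht : ∀ x ∈ s, F x 0 = t) (ht' : |t' - t| ≤ c * S) :
    ∃ σ : X → ℝ, LipschitzOnWith (D * S / c) σ s ∧
      ∀ x ∈ s, σ x ∈ Icc (-S : ℝ) S ∧ F x (σ x) = t' := by
  have hhit (x : X) : ∃ τ, x ∈ s → τ ∈ Icc (-S : ℝ) S ∧ F x τ = t' := by
    by_cases hx : x ∈ s
    · obtain ⟨τ, hτ, hFτ⟩ :=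
        exists_mem_Icc_eq_of_le_deriv (hF x) S.2 (hc x hx) (by rwa [ht x hx])
      exact ⟨τ, fun _ ↦ ⟨hτ, hFτ⟩⟩
    · exact ⟨0, fun h ↦ absurd h hx⟩
  choose σ hσ using hhit
  refine ⟨σ, .of_dist_le_mul fun x hx y hy ↦ ?_, hσ⟩
  obtain ⟨hσx, hFx⟩ := hσ x hx
  obtain ⟨hσy, hFy⟩ := hσ y hy
  have hdiff : |F y (σ y) - F x (σ y)| ≤ D * dist x y * |σ y| := by
    have := (convex_Icc (-S : ℝ) S).norm_image_sub_le_of_norm_deriv_le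
      (f := fun τ ↦ F y τ - F x τ) (fun τ _ ↦ ((hF y).sub (hF x)).differentiableAt)
      (fun τ hτ ↦ by
        rw [deriv_fun_sub (hF y).differentiableAt (hF x).differentiableAt, norm_sub_rev]
        exact hD x hx y hy τ hτ) (show (0 : ℝ) ∈ Icc (-S : ℝ) S by simp) hσy
    simpa [ht x hx, ht y hy] using this
  have hc0' : (0 : ℝ) < c := hc0
  rw [Real.dist_eq, NNReal.coe_div, NNReal.coe_mul, div_mul_eq_mul_div, le_div_iff₀' hc0']
  calc c * |σ x - σ y| ≤ |F x (σ x) - F x (σ y)| :=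
        mul_abs_sub_le_abs_image_sub_of_le_deriv (convex_Icc _ _) (hF x) (hc x hx) hσx hσy
    _ = |F y (σ y) - F x (σ y)| := by rw [hFx, hFy]
    _ ≤ D * dist x y * |σ y| := hdiff
    _ ≤ D * dist x y * S := by gcongr; exact abs_le.2 hσy
    _ = D * S * dist x y := by ring

variable {E : Type*} [NormedAddCommGroup E] [NormedSpace ℝ E] {T : E → ℝ} {V : E → E} {W : Set E}

/-- The rate at which `T` grows along the segment issuing from `z.1` with velocity `V z.1`, after
time `z.2`. The pair is uncurried because its joint regularity is what matters. -/
noncomputable def slopeAlong (T : E → ℝ) (V : E → E) (z : E × ℝ) : ℝ :=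
  fderiv ℝ T (z.1 + z.2 • V z.1) (V z.1)

lemma hasDerivAt_slopeAlong (hT : Differentiable ℝ T) (x : E) (τ : ℝ) :
    HasDerivAt (fun τ : ℝ ↦ T (x + τ • V x)) (slopeAlong T V (x, τ)) τ := by
  have hline : HasDerivAt (fun τ : ℝ ↦ x + τ • V x) (V x) τ := by
    simpa using ((hasDerivAt_id τ).smul_const (V x)).const_add x
  exact (hT (x + τ • V x)).hasFDerivAt.comp_hasDerivAt τ hline

lemma contDiff_slopeAlong (hT : ContDiff ℝ 2 T) (hV : ContDiff ℝ 1 V) :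
    ContDiff ℝ 1 (slopeAlong T V) := by
  have : ContDiff ℝ 1 (fderiv ℝ T) := hT.fderiv_right le_rfl
  unfold slopeAlong
  fun_prop

lemma exists_forall_le_slopeAlong (hslope : Continuous (slopeAlong T V)) (hW : IsCompact W)
    (hpos : ∀ x ∈ W, 0 < fderiv ℝ T x (V x)) :
    ∃ c > 0, ∀ᶠ S : ℝ in 𝓝[>] 0, ∀ x ∈ W, ∀ τ ∈ Icc (-S) S, c ≤ slopeAlong T V (x, τ) := by
  obtain ⟨c, hc0, hc⟩ := hW.exists_forall_le'
    (hslope.comp (Continuous.prodMk_left (0 : ℝ))).continuousOn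
    (a := 0) (by simpa [slopeAlong] using hpos)
  refine ⟨c / 2, half_pos hc0, ?_⟩
  have hnear : ∀ᶠ τ : ℝ in 𝓝 0, ∀ x ∈ W, c / 2 < slopeAlong T V (x, τ) :=
    hW.eventually_forall_of_forall_eventually fun x hx ↦
      (hslope.comp continuous_swap).continuousAt.eventually_const_lt (by
        exact (half_lt_self hc0).trans_le (hc x hx))
  obtain ⟨r, hr, hball⟩ := Metric.eventually_nhds_iff.1 hnear
  filter_upwards [Ioo_mem_nhdsGT hr] with S hS x hx τ hτ
  exact (hball (by simpa using (abs_le.2 hτ).trans_lt hS.2) x hx).le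

lemma exists_lipschitzOnWith_displacement_of_le_slopeAlong (hT : Differentiable ℝ T)
    {s : Set E} {S c D L M : ℝ≥0} {t t' : ℝ} (hs : s ⊆ T ⁻¹' {t}) (hc0 : 0 < c)
    (hc : ∀ x ∈ s, ∀ τ ∈ Icc (-S : ℝ) S, c ≤ slopeAlong T V (x, τ))
    (hD : LipschitzOnWith D (slopeAlong T V) (s ×ˢ Icc (-S : ℝ) S))
    (hL : LipschitzOnWith L V s) (hM : ∀ x ∈ s, ‖V x‖ ≤ M) (ht' : |t' - t| ≤ c * S) :
    ∃ g : E → E, LipschitzOnWith (S * (L + D / c * M)) g s ∧ ∀ x ∈ s, T (x + g x) = t' := by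
  have hderiv (x : E) (τ : ℝ) := (hasDerivAt_slopeAlong (V := V) hT x τ).deriv
  obtain ⟨σ, hσ, hσt⟩ := exists_lipschitzOnWith_hittingTime (F := fun x τ ↦ T (x + τ • V x))
    (fun x τ ↦ (hasDerivAt_slopeAlong hT x τ).differentiableAt) hc0
    (by simpa only [hderiv] using hc)
    (fun x hx y hy τ hτ ↦ by
      simpa [hderiv, Prod.dist_eq, Real.dist_eq] using
        hD.dist_le_mul (x, τ) ⟨hx, hτ⟩ (y, τ) ⟨hy, hτ⟩)
    (fun x hx ↦ by simpa using hs hx) ht'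
  refine ⟨fun x ↦ σ x • V x, .of_dist_le_mul fun x hx y hy ↦ ?_, fun x hx ↦ (hσt x hx).2⟩
  have hsplit : σ x • V x - σ y • V y = σ x • (V x - V y) + (σ x - σ y) • V y := by module
  rw [dist_eq_norm, hsplit]
  calc ‖σ x • (V x - V y) + (σ x - σ y) • V y‖
      ≤ |σ x| * dist (V x) (V y) + dist (σ x) (σ y) * ‖V y‖ := by
        simpa only [norm_smul, dist_eq_norm, Real.norm_eq_abs] using
          norm_add_le (σ x • (V x - V y)) ((σ x - σ y) • V y)
    _ ≤ S * (L * dist x y) + (D * S / c * dist x y) * M := by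
        gcongr
        · exact abs_le.2 (hσt x hx).1
        · exact hL.dist_le_mul x hx y hy
        · exact hσ.dist_le_mul x hx y hy
        · exact hM y hy
    _ = (S * (L + D / c * M) : ℝ≥0) * dist x y := by
        push_cast
        ring

lemma eventually_exists_lipschitzOnWith_displacement (hT : ContDiff ℝ 2 T) (hV : ContDiff ℝ 1 V)
    (hW : IsCompact W) (hpos : ∀ x ∈ W, 0 < fderiv ℝ T x (V x)) {q : ℝ≥0} (hq : 0 < q) :
    ∀ᶠ z : ℝ × ℝ in 𝓤 ℝ, ∃ g : E → E, LipschitzOnWith q g (T ⁻¹' {z.1} ∩ W) ∧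
      ∀ x ∈ T ⁻¹' {z.1} ∩ W, T (x + g x) = z.2 := by
  have hslope := contDiff_slopeAlong hT hV
  obtain ⟨c, hc0, hc⟩ := exists_forall_le_slopeAlong hslope.continuous hW hpos
  lift c to ℝ≥0 using hc0.le
  obtain ⟨D, hD⟩ := (hslope.locallyLipschitz.locallyLipschitzOn
    (s := W ×ˢ Icc (-1) 1)).exists_lipschitzOnWith_of_compact (hW.prod isCompact_Icc)
  obtain ⟨L, hL⟩ := (hV.locallyLipschitz.locallyLipschitzOn
    (s := W)).exists_lipschitzOnWith_of_compact hW
  obtain ⟨M, hM0, hM⟩ := (hW.image hV.continuous).isBounded.exists_pos_norm_le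
  lift M to ℝ≥0 using hM0.le
  have hsmall : ∀ᶠ S : ℝ in 𝓝[>] 0, S * (L + D / c * M) < q := by
    have : Tendsto (fun S : ℝ ↦ S * (L + D / c * M : ℝ)) (𝓝[>] 0) (𝓝 0) :=
      tendsto_nhdsWithin_of_tendsto_nhds (Continuous.tendsto' (by fun_prop) _ _ (by simp))
    exact this.eventually_lt_const hq
  obtain ⟨S, ⟨⟨hS, hSq⟩, hS0, hS1⟩⟩ :=
    ((hc.and hsmall).and (Ioo_mem_nhdsGT (zero_lt_one (α := ℝ)))).exists
  lift S to ℝ≥0 using hS0.le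
  have hcS : (0 : ℝ) < c * S := mul_pos hc0 hS0
  filter_upwards [dist_mem_uniformity hcS] with z hz
  obtain ⟨g, hg, hgt⟩ := exists_lipschitzOnWith_displacement_of_le_slopeAlong
    (hT.differentiable two_ne_zero) (V := V) (s := T ⁻¹' {z.1} ∩ W) (t' := z.2)
    inter_subset_left hc0 (fun x hx ↦ hS x hx.2)
    (hD.mono (prod_mono inter_subset_right (Icc_subset_Icc (by linarith) hS1.le)))
    (hL.mono inter_subset_right) (fun x hx ↦ hM _ (mem_image_of_mem V hx.2))
    (by rw [← Real.dist_eq, dist_comm]; exact hz.le)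
  exact ⟨g, hg.weaken (by exact_mod_cast hSq.le), hgt⟩

end Displacement

lemma exists_lt_one_inv_one_sub_rpow_lt (d : ℝ) {δ : ℝ≥0} (hδ : 0 < δ) :
    ∃ q : ℝ≥0, 0 < q ∧ q < 1 ∧ (1 - q)⁻¹ ^ d < 1 + δ := by
  have hsub : Tendsto (fun q : ℝ≥0 ↦ 1 - q) (𝓝[>] 0) (𝓝 1) :=
    tendsto_nhdsWithin_of_tendsto_nhds (Continuous.tendsto' (by fun_prop) _ _ (by simp))
  have hlim : Tendsto (fun q : ℝ≥0 ↦ (1 - q)⁻¹ ^ d) (𝓝[>] 0) (𝓝 1) := by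
    simpa using (hsub.inv₀ one_ne_zero).nnrpow (tendsto_const_nhds (x := d)) (.inl (by simp))
  obtain ⟨q, hqδ, hq0, hq1⟩ := ((hlim.eventually_lt_const (lt_add_of_pos_right 1 hδ)).and
    (Ioo_mem_nhdsGT one_pos)).exists
  exact ⟨q, hq0, hq1, hqδ⟩

lemma finite_inter_preimage_zero_of_antilipschitzWith_fderiv {E F : Type*} [NormedAddCommGroup E]
    [NormedSpace ℝ E] [NormedAddCommGroup F] [NormedSpace ℝ F] {D : E → F}
    (hD : Differentiable ℝ D) {K : Set E} (hK : IsCompact K)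
    (hzero : ∀ p ∈ K, D p = 0 → ∃ C, AntilipschitzWith C (fderiv ℝ D p)) :
    (K ∩ D ⁻¹' {0}).Finite := by
  refine (hK.inter_right (isClosed_singleton.preimage hD.continuous)).finite
    (isDiscrete_iff_nhdsNE.2 fun p hp ↦ ?_)
  have hisolated : ∀ᶠ x in 𝓝[≠] p, D x ≠ 0 :=
    (hD p).hasFDerivAt.eventually_ne (hzero p hp.1 hp.2)
  rw [← disjoint_iff, disjoint_principal_right]
  exact hisolated.mono fun x hx hxK ↦ hx hxK.2

section LevelMeasure

variable {E : Type*} [NormedAddCommGroup E] [NormedSpace ℝ E] [FiniteDimensional ℝ E]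
  [MeasurableSpace E] [BorelSpace E] {T : E → ℝ}

lemma eventually_hausdorffMeasure_level_inter_le (hT : ContDiff ℝ 2 T) {W : Set E}
    (hW : IsCompact W) (hcrit : ∀ x ∈ W, fderiv ℝ T x ≠ 0) {d : ℝ} (hd : 0 ≤ d)
    {δ : ℝ≥0} (hδ : 0 < δ) :
    ∀ᶠ z : ℝ × ℝ in 𝓤 ℝ, μH[d] (T ⁻¹' {z.1} ∩ W) ≤ (1 + δ) * μH[d] (T ⁻¹' {z.2}) := by
  obtain ⟨R, hR⟩ := exists_clm_forall_apply_pos E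
  obtain ⟨q, hq0, hq1, hqδ⟩ := exists_lt_one_inv_one_sub_rpow_lt d hδ
  filter_upwards [eventually_exists_lipschitzOnWith_displacement hT
    (R.contDiff.comp (hT.fderiv_right le_rfl)) hW (fun x hx ↦ hR _ (hcrit x hx)) hq0]
    with z ⟨g, hg, hgt⟩
  calc μH[d] (T ⁻¹' {z.1} ∩ W)
      ≤ ((1 - q)⁻¹ : ℝ≥0) ^ d * μH[d] ((fun x ↦ x + g x) '' (T ⁻¹' {z.1} ∩ W)) :=
        hausdorffMeasure_le_image_add_of_lipschitzOnWith hg hq1 hd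
    _ ≤ (1 + δ) * μH[d] (T ⁻¹' {z.2}) := by
        gcongr
        · rw [← ENNReal.coe_rpow_of_nonneg _ hd]
          exact_mod_cast hqδ.le
        · exact image_subset_iff.2 hgt

lemma uniformlyNullAlong_level_of_nondegenerate (hE : 2 ≤ finrank ℝ E) (hT : ContDiff ℝ 2 T)
    {p : E} (hp : fderiv ℝ T p = 0 → ∃ K > 0, AntilipschitzWith K (fderiv ℝ (fderiv ℝ T) p)) :
    UniformlyNullAlong μH[(finrank ℝ E : ℝ) - 1] (fun t ↦ T ⁻¹' {t}) (𝓝 p) := by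
  have hfderiv : ContDiff ℝ 1 (fderiv ℝ T) := hT.fderiv_right le_rfl
  by_cases hcrit : fderiv ℝ T p = 0
  · obtain ⟨K, hK0, hK⟩ := hp hcrit
    exact uniformlyNullAlong_level_of_fderiv_eq_zero hE
      (hfderiv.differentiable one_ne_zero p).hasFDerivAt hcrit hK0 hK
  · exact uniformlyNullAlong_level_of_fderiv_ne_zero hE hfderiv.continuous.continuousAt hcrit

lemma eventually_hausdorffMeasure_level_le_add (hT : ContDiff ℝ 2 T) {I : Set ℝ}
    (hI : IsCompact (T ⁻¹' I)) {d : ℝ} (hd : 0 ≤ d)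
    (hnull : UniformlyNullAlong μH[d] (fun t ↦ T ⁻¹' {t})
      (𝓝ˢ (T ⁻¹' I ∩ fderiv ℝ T ⁻¹' {0}))) {δ : ℝ≥0} (hδ : 0 < δ) :
    ∀ᶠ z : ℝ × ℝ in 𝓤 ℝ, z.1 ∈ I →
      μH[d] (T ⁻¹' {z.1}) ≤ (1 + δ) * μH[d] (T ⁻¹' {z.2}) + δ := by
  obtain ⟨U, hU, hUδ⟩ := hnull δ (by exact_mod_cast hδ)
  have hcrit : ∀ x ∈ T ⁻¹' I \ interior U, fderiv ℝ T x ≠ 0 := fun x hx hx0 ↦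
    hx.2 (subset_interior_iff_mem_nhdsSet.2 hU ⟨hx.1, hx0⟩)
  filter_upwards [eventually_hausdorffMeasure_level_inter_le hT (hI.diff isOpen_interior) hcrit
    hd hδ] with z hz hzI
  have hsplit : T ⁻¹' {z.1} ⊆ T ⁻¹' {z.1} ∩ (T ⁻¹' I \ interior U) ∪ T ⁻¹' {z.1} ∩ U := by
    intro x (hx : T x = z.1)
    by_cases hxU : x ∈ U
    · exact .inr ⟨hx, hxU⟩
    · exact .inl ⟨hx, show T x ∈ I from hx ▸ hzI, fun h ↦ hxU (interior_subset h)⟩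
  calc μH[d] (T ⁻¹' {z.1})
      ≤ μH[d] (T ⁻¹' {z.1} ∩ (T ⁻¹' I \ interior U)) + μH[d] (T ⁻¹' {z.1} ∩ U) :=
        (measure_mono hsplit).trans (measure_union_le _ _)
    _ ≤ (1 + δ) * μH[d] (T ⁻¹' {z.2}) + δ := add_le_add hz (hUδ z.1)

end LevelMeasure

theorem stmt8_general {E : Type*} [NormedAddCommGroup E] [NormedSpace ℝ E] [FiniteDimensional ℝ E]
    [MeasurableSpace E] [BorelSpace E] (hE : 2 ≤ finrank ℝ E) {T : E → ℝ} (hT : ContDiff ℝ 2 T)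
    {I : Set ℝ} (hI : IsCompact (T ⁻¹' I))
    (hnd : ∀ p, T p ∈ I → fderiv ℝ T p = 0 →
      ∀ v, (∀ w, fderiv ℝ (fderiv ℝ T) p v w = 0) → v = 0) :
    (∀ t ∈ I, μH[(finrank ℝ E : ℝ) - 1] (T ⁻¹' {t}) ≠ ⊤) ∧
    ContinuousOn (fun t ↦ (μH[(finrank ℝ E : ℝ) - 1] (T ⁻¹' {t})).toReal) I := by
  have hantilip (p : E) (hp : T p ∈ I) (hcrit : fderiv ℝ T p = 0) :
      ∃ K > 0, AntilipschitzWith K (fderiv ℝ (fderiv ℝ T) p) :=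
    (fderiv ℝ (fderiv ℝ T) p).toLinearMap.exists_antilipschitzWith <|
      LinearMap.ker_eq_bot'.2 fun v hv ↦ hnd p hp hcrit v fun w ↦ DFunLike.congr_fun hv w
  have hnull (p : E) (hp : T p ∈ I) :
      UniformlyNullAlong μH[(finrank ℝ E : ℝ) - 1] (fun t ↦ T ⁻¹' {t}) (𝓝 p) :=
    uniformlyNullAlong_level_of_nondegenerate hE hT (hantilip p hp)
  have hfinite : (T ⁻¹' I ∩ fderiv ℝ T ⁻¹' {0}).Finite :=
    finite_inter_preimage_zero_of_antilipschitzWith_fderiv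
      ((hT.fderiv_right le_rfl).differentiable one_ne_zero) hI
      fun p hp hcrit ↦ (hantilip p hp hcrit).imp fun _ h ↦ h.2
  have hfin : ∀ t ∈ I, μH[(finrank ℝ E : ℝ) - 1] (T ⁻¹' {t}) ≠ ⊤ := by
    intro t ht
    have hlevel : T ⁻¹' {t} ⊆ T ⁻¹' I := preimage_mono (singleton_subset_iff.2 ht)
    exact UniformlyNullAlong.measure_ne_top_of_isCompact (A := fun t ↦ T ⁻¹' {t})
      (hI.of_isClosed_subset (isClosed_singleton.preimage hT.continuous) hlevel)
      fun p hp ↦ hnull p (hlevel hp)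
  have hdim : 0 ≤ (finrank ℝ E : ℝ) - 1 := by
    rw [sub_nonneg]
    exact_mod_cast one_le_two.trans hE
  exact ⟨hfin, continuousOn_toReal_of_forall_eventually_le hfin fun δ hδ ↦
    eventually_hausdorffMeasure_level_le_add hT hI hdim
      (.nhdsSet hfinite fun p hp ↦ hnull p hp.1) hδ⟩

/-- Let `T : ℝ^m → ℝ` (`m ≥ 2`) be `C²`, with `T⁻¹([−ε, ε])` compact and
every critical point `p` with `T p ∈ [−ε, ε]` nondegenerate (the Hessian at `p` is a
nondegenerate bilinear form). Then `ℋ^{m−1}(T⁻¹(t))` is finite for every `t ∈ [−ε, ε]`,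
and `t ↦ ℋ^{m−1}(T⁻¹(t))` is continuous on `[−ε, ε]`. -/
theorem stmt8 {m : ℕ} (hm : 2 ≤ m) (T : EuclideanSpace ℝ (Fin m) → ℝ)
    (hT : ContDiff ℝ 2 T) (ε : ℝ) (hε : 0 < ε)
    (hcomp : IsCompact (T ⁻¹' Set.Icc (-ε) ε))
    (hnd : ∀ p : EuclideanSpace ℝ (Fin m), T p ∈ Set.Icc (-ε) ε → fderiv ℝ T p = 0 →
      ∀ v : EuclideanSpace ℝ (Fin m),
        (∀ w : EuclideanSpace ℝ (Fin m), fderiv ℝ (fun y => fderiv ℝ T y) p v w = 0) →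
        v = 0) :
    (∀ t ∈ Set.Icc (-ε) ε, μH[(m : ℝ) - 1] (T ⁻¹' {t}) ≠ ⊤) ∧
    ContinuousOn (fun t : ℝ => (μH[(m : ℝ) - 1] (T ⁻¹' {t})).toReal)
      (Set.Icc (-ε) ε) := by
  simpa only [finrank_euclideanSpace_fin] using
    stmt8_general (by rwa [finrank_euclideanSpace_fin]) hT hcomp hnd
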